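/- Let G be the CPDAG of the Markov equivalence class of a DAG, and let X and Y be distinct nodes. Then X is an ancestor of Y in at least one DAG of the Markov equivalence class represented by G if and only if there is a possibly directed path from X to Y in G. -/

import Mathlib

/-- A directed acyclic graph on node set `V`: a directed edge relation with no
directed cycles (no edge `a → b` together with a directed path from `b` back to `a`). -/
structure Dag (V : Type*) where
  edge : V → V → Prop
  acyclic : ∀ a b : V, edge a b → ¬ Relation.ReflTransGen edge b a

variable {V : Type*}

namespace Dag

/-- `a` is an ancestor of `b` (equivalently, `b` is a descendant of `a`):
there is a directed path from `a` to `b`; every node is its own ancestor. -/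
def Anc (D : Dag V) (a b : V) : Prop := Relation.ReflTransGen D.edge a b

/-- `a` and `b` are adjacent (joined by an edge in either direction). -/
def Adj (D : Dag V) (a b : V) : Prop := D.edge a b ∨ D.edge b a

/-- The parents of `x` in the DAG `D`. -/
def Pa (D : Dag V) (x : V) : Set V := {a | D.edge a x}

/-- The Markov blanket of `x`: parents, children, and parents of children of `x`
(excluding `x` itself). -/
def MB (D : Dag V) (x : V) : Set V :=
  {v | v ≠ x ∧ (D.edge v x ∨ D.edge x v ∨ ∃ c : V, D.edge x c ∧ D.edge v c)}

end Dag

/-- A path between `x` and `y` with respect to an adjacency relation `A`: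
a sequence of distinct nodes, starting at `x` and ending at `y`, in which
consecutive nodes are adjacent. `n` is the number of edges of the path. -/
structure GPath (A : V → V → Prop) (x y : V) where
  n : ℕ
  f : Fin (n + 1) → V
  inj : Function.Injective f
  first : f ⟨0, by omega⟩ = x
  last : f ⟨n, by omega⟩ = y
  adj : ∀ i : Fin n, A (f i.castSucc) (f i.succ)

namespace GPath

/-- The non-endpoint node at position `i` of the path `p` is a collider with respect
to the directed edge relation `E`: both incident edges of the path point into it. -/
def ColliderAt {A : V → V → Prop} {x y : V} (p : GPath A x y)
    (E : V → V → Prop) (i : ℕ) : Prop :=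
  ∃ (_ : 0 < i) (_ : i < p.n),
    E (p.f ⟨i - 1, by omega⟩) (p.f ⟨i, by omega⟩) ∧
    E (p.f ⟨i + 1, by omega⟩) (p.f ⟨i, by omega⟩)

/-- The path `p` is blocked by the node set `S` in the DAG `D`: it contains a
non-collider that lies in `S`, or a collider such that neither the collider nor any
of its descendants lies in `S`. -/
def Blocked {A : V → V → Prop} {x y : V} (p : GPath A x y)
    (D : Dag V) (S : Set V) : Prop :=
  ∃ (i : ℕ) (_ : 0 < i) (_ : i < p.n),
    (¬ p.ColliderAt D.edge i ∧ p.f ⟨i, by omega⟩ ∈ S) ∨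
    (p.ColliderAt D.edge i ∧ ∀ d : V, D.Anc (p.f ⟨i, by omega⟩) d → d ∉ S)

end GPath

namespace Dag

/-- `x` and `y` are d-separated by `S` in the DAG `D`: every path between `x` and `y`
is blocked by `S`. -/
def dSep (D : Dag V) (x y : V) (S : Set V) : Prop :=
  ∀ p : GPath D.Adj x y, p.Blocked D S

/-- Two DAGs on the same node set are Markov equivalent if they have exactly the same
d-separation relations. -/
def MEquiv (D D' : Dag V) : Prop :=
  ∀ (x y : V) (S : Set V), D.dSep x y S ↔ D'.dSep x y S

/-- The edge between `a` and `b` is directed `a → b` in the CPDAG of the Markov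
equivalence class of `D`: the edge `a → b` holds in every DAG Markov equivalent to `D`. -/
def CpDir (D : Dag V) (a b : V) : Prop :=
  ∀ D' : Dag V, D.MEquiv D' → D'.edge a b

/-- The edge between `a` and `b` is undirected (`a − b`) in the CPDAG: `a` and `b` are
adjacent (the CPDAG has the same adjacencies as the DAGs of the MEC) but the edge is not
directed either way in the CPDAG. -/
def CpUndir (D : Dag V) (a b : V) : Prop :=
  D.Adj a b ∧ ¬ D.CpDir a b ∧ ¬ D.CpDir b a

/-- `Pa_G(a)`: the nodes with a directed edge into `a` in the CPDAG. -/
def CpPa (D : Dag V) (a : V) : Set V := {p | D.CpDir p a}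

/-- `Ch_G(a)`: the nodes `b` with the edge directed `a → b` in the CPDAG. -/
def CpCh (D : Dag V) (a : V) : Set V := {c | D.CpDir a c}

/-- `Sib_G(a)`: the nodes joined to `a` by an undirected edge in the CPDAG. -/
def CpSib (D : Dag V) (a : V) : Set V := {s | D.CpUndir a s}

end Dag

namespace GPath

/-- `p` is a possibly directed path in the CPDAG: no edge on it is directed
backwards (as `V_i ← V_{i+1}`) in the CPDAG. -/
def CpPossiblyDirected {D : Dag V} {x y : V} (p : GPath D.Adj x y) : Prop :=
  ∀ i : Fin p.n, ¬ D.CpDir (p.f i.succ) (p.f i.castSucc)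

/-- `p` is a (fully) directed path in the CPDAG: every edge on it is directed
forwards in the CPDAG. -/
def CpDirected {D : Dag V} {x y : V} (p : GPath D.Adj x y) : Prop :=
  ∀ i : Fin p.n, D.CpDir (p.f i.castSucc) (p.f i.succ)

/-- `p` is a directed path from `x` to `y` in the DAG `D` itself. -/
def DirectedIn {D : Dag V} {x y : V} (p : GPath D.Adj x y) : Prop :=
  ∀ i : Fin p.n, D.edge (p.f i.castSucc) (p.f i.succ)

/-- `p` is unshielded: for every three consecutive nodes on it, the first and the
third are non-adjacent. -/
def Unshielded {D : Dag V} {x y : V} (p : GPath D.Adj x y) : Prop :=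
  ∀ (i : ℕ) (_ : i + 2 ≤ p.n), ¬ D.Adj (p.f ⟨i, by omega⟩) (p.f ⟨i + 2, by omega⟩)

end GPath

namespace Dag

/-- `x` is a possible ancestor of `y` in the CPDAG: there is a possibly directed path
from `x` to `y`. -/
def PossAn (D : Dag V) (x y : V) : Prop :=
  ∃ p : GPath D.Adj x y, p.CpPossiblyDirected

/-- `x` is an explicit ancestor of `y` in the CPDAG: there is a fully directed path
from `x` to `y` in the CPDAG. -/
def ExplAn (D : Dag V) (x y : V) : Prop :=
  ∃ p : GPath D.Adj x y, p.CpDirected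

/-- The CPDAG is amenable relative to `(x, y)`: every possibly directed path from
`x` to `y` starts with a directed edge out of `x`. -/
def Amenable (D : Dag V) (x y : V) : Prop :=
  ∀ p : GPath D.Adj x y, p.CpPossiblyDirected →
    ∀ _ : 0 < p.n, D.CpDir (p.f ⟨0, by omega⟩) (p.f ⟨1, by omega⟩)

/-- `S` is a valid adjustment set for `(x, y)` in the DAG `D`:
(i) no element of `S` is a descendant of any node `w ≠ x` lying on a directed path
from `x` to `y`, and (ii) every path between `x` and `y` that is not a directed path
from `x` to `y` is blocked by `S`. -/
def ValidAdjustment (D : Dag V) (x y : V) (S : Set V) : Prop :=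
  (∀ s ∈ S, ∀ w : V, w ≠ x → D.Anc x w → D.Anc w y → ¬ D.Anc w s) ∧
  (∀ p : GPath D.Adj x y, ¬ p.DirectedIn → p.Blocked D S)

/-- `Cn_D(x, y)`: the nodes `w ≠ x` lying on some directed path from `x` to `y` in `D`. -/
def Cn (D : Dag V) (x y : V) : Set V := {w | w ≠ x ∧ D.Anc x w ∧ D.Anc w y}

end Dag

/-!
d-separation can be tested on walks instead of paths. A shortest active walk has only unshielded
colliders, and its colliders are the same in every DAG with the same adjacencies and v-structures.
Hence these data determine the Markov equivalence class (Verma and Pearl).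

The nodes of a chain component of the CPDAG, i.e. of a component of its undirected part, have the
same parents outside the component, and the component contains no v-structure. It can therefore be
reoriented, independently of the rest of the DAG, so that any prescribed node becomes a root; for
infinite components this is a compactness argument. So no edge between two nodes of a chain
component is directed in the CPDAG, and it follows that if `a, b, c` is a possibly directed path
and `a` is adjacent to `c`, then the edge between `a` and `c` is not directed towards `a`.

A shortest possibly directed path from `X` to `Y` is thus induced. Choose a DAG in the class in
which its first edge points forwards. The first edge pointing backwards would create a v-structure,
which would be directed the same way in the CPDAG; so the whole path is directed in that DAG.
-/

open Relation

theorem reflTransGen_of_chain {R : V → V → Prop} {n : ℕ} {f : ℕ → V}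
    (h : ∀ i < n, R (f i) (f (i + 1))) : ReflTransGen R (f 0) (f n) := by
  induction n with
  | zero => exact .refl
  | succ n ih => exact (ih fun i hi => h i (by omega)).tail (h n (by omega))

theorem exists_chain {R : V → V → Prop} {x y : V} (h : ReflTransGen R x y) :
    ∃ (n : ℕ) (f : ℕ → V), f 0 = x ∧ f n = y ∧ ∀ i < n, R (f i) (f (i + 1)) := by
  induction h using ReflTransGen.head_induction_on with
  | refl => exact ⟨0, fun _ => y, rfl, rfl, fun i hi => absurd hi i.not_lt_zero⟩
  | @head x _ hxz _ ih =>
    obtain ⟨n, f, rfl, hn, hf⟩ := ih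
    refine ⟨n + 1, fun | 0 => x | i + 1 => f i, rfl, hn, ?_⟩
    rintro (_ | i) hi
    exacts [hxz, hf i (by omega)]

/-- The sequence `f` with the `d` terms following `f i` left out. It is used to shorten walks. -/
def skipAfter (f : ℕ → V) (i d k : ℕ) : V := if k ≤ i then f k else f (k + d)

theorem skipAfter_of_le (f : ℕ → V) {i d k : ℕ} (h : k ≤ i) : skipAfter f i d k = f k := if_pos h

theorem skipAfter_of_lt (f : ℕ → V) {i d k : ℕ} (h : i < k) : skipAfter f i d k = f (k + d) :=
  if_neg h.not_ge

theorem chain_skipAfter {R : V → V → Prop} {n i d : ℕ} {f : ℕ → V}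
    (h : ∀ k < n, R (f k) (f (k + 1))) (hR : R (f i) (f (i + d + 1))) :
    ∀ k < n - d, R (skipAfter f i d k) (skipAfter f i d (k + 1)) := by
  intro k hk
  rcases lt_trichotomy k i with hki | rfl | hik
  · rw [skipAfter_of_le f hki.le, skipAfter_of_le f hki]
    exact h k (by omega)
  · rw [skipAfter_of_le f le_rfl, skipAfter_of_lt f (Nat.lt_add_one k), Nat.add_right_comm]
    exact hR
  · rw [skipAfter_of_lt f hik, skipAfter_of_lt f (by omega), Nat.add_right_comm]
    exact h (k + d) (by omega)

theorem exists_induced_chain {R : V → V → Prop} {x y : V} (h : ReflTransGen R x y) :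
    ∃ (n : ℕ) (f : ℕ → V), f 0 = x ∧ f n = y ∧ (∀ i < n, R (f i) (f (i + 1))) ∧
      (∀ i j, i < j → j ≤ n → f i ≠ f j) ∧ ∀ i j, i + 1 < j → j ≤ n → ¬ R (f i) (f j) := by
  classical
  have hex := exists_chain h
  obtain ⟨f, rfl, hn, hf⟩ := Nat.find_spec hex
  have hmin (m : ℕ) (g : ℕ → V) (h0 : g 0 = f 0) (hm : g m = y)
      (hg : ∀ i < m, R (g i) (g (i + 1))) : Nat.find hex ≤ m :=
    Nat.find_min' hex ⟨g, h0, hm, hg⟩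
  generalize Nat.find hex = n at hn hf hmin
  have no_shortcut (i d : ℕ) (hd : 0 < d) (hid : i + d < n) : ¬ R (f i) (f (i + d + 1)) := by
    intro hR
    have := hmin (n - d) (skipAfter f i d) (skipAfter_of_le f i.zero_le)
      (by rw [skipAfter_of_lt f (by omega), Nat.sub_add_cancel (by omega), hn])
      (chain_skipAfter hf hR)
    omega
  refine ⟨n, f, rfl, hn, hf, fun i j hij hjn heq => ?_, fun i j hij hjn => ?_⟩
  · rcases hjn.eq_or_lt with rfl | hjn
    · have := hmin i f rfl (heq.trans hn) fun k hk => hf k (by omega)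
      omega
    · refine no_shortcut i (j - i) (by omega) (by omega) ?_
      rw [heq, Nat.add_sub_of_le hij.le]
      exact hf j hjn
  · have := no_shortcut i (j - i - 1) (by omega) (by omega)
    rwa [show i + (j - i - 1) + 1 = j by omega] at this

namespace Dag

variable {D : Dag V} {S : Set V} {a b u v w x y : V}

theorem irrefl (D : Dag V) (a : V) : ¬ D.edge a a := fun h => D.acyclic a a h .refl

theorem asymm (h : D.edge a b) : ¬ D.edge b a := fun h' => D.acyclic a b h (.single h')

theorem Adj.symm (h : D.Adj a b) : D.Adj b a := Or.symm h

theorem Adj.ne (h : D.Adj a b) : a ≠ b := by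
  rintro rfl
  exact h.elim (D.irrefl a) (D.irrefl a)

theorem Adj.edge_of_anc (h : D.Adj a b) (hab : D.Anc a b) : D.edge a b :=
  h.resolve_right fun hba => D.acyclic b a hba hab

/-- The middle node `v` of the walk segment `u, v, w` is a collider. -/
def Collider (D : Dag V) (u v w : V) : Prop := D.edge u v ∧ D.edge w v

theorem Collider.symm (h : D.Collider u v w) : D.Collider w v u := And.symm h

/-- The walk segment `u, v, w` does not block in the presence of `S`: the middle node `v` is a
collider with a descendant in `S`, or a non-collider outside `S`. -/
def OpenTriple (D : Dag V) (S : Set V) (u v w : V) : Prop :=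
  (D.Collider u v w → ∃ s ∈ S, D.Anc v s) ∧ (¬ D.Collider u v w → v ∉ S)

theorem OpenTriple.symm (h : D.OpenTriple S u v w) : D.OpenTriple S w v u :=
  ⟨fun hc => h.1 hc.symm, fun hc => h.2 (mt Collider.symm hc)⟩

/-- `f 0, …, f n` is a walk, that is, a path with repeated nodes permitted, that is not blocked
by `S`. -/
structure ActiveWalk (D : Dag V) (S : Set V) (n : ℕ) (f : ℕ → V) : Prop where
  adj : ∀ i < n, D.Adj (f i) (f (i + 1))
  openTriple : ∀ i, i + 1 < n → D.OpenTriple S (f i) (f (i + 1)) (f (i + 2))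

/-- The negation of d-separation, phrased with walks instead of paths. -/
def DConnected (D : Dag V) (S : Set V) (x y : V) : Prop :=
  ∃ (n : ℕ) (f : ℕ → V), f 0 = x ∧ f n = y ∧ D.ActiveWalk S n f

/-- An active walk of minimal length between its endpoints. -/
structure ShortestActiveWalk (D : Dag V) (S : Set V) (n : ℕ) (f : ℕ → V) : Prop extends
    D.ActiveWalk S n f where
  le_length : ∀ m g, g 0 = f 0 → g m = f n → D.ActiveWalk S m g → n ≤ m

section ActiveWalk

variable {n : ℕ} {f : ℕ → V}

theorem ActiveWalk.take (h : D.ActiveWalk S n f) {m : ℕ} (hm : m ≤ n) : D.ActiveWalk S m f where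
  adj i hi := h.adj i (by omega)
  openTriple i hi := h.openTriple i (by omega)

theorem ActiveWalk.reverse (h : D.ActiveWalk S n f) : D.ActiveWalk S n fun k => f (n - k) where
  adj i hi := by
    have := (h.adj (n - (i + 1)) (by omega)).symm
    rwa [show n - (i + 1) + 1 = n - i by omega] at this
  openTriple i hi := by
    have := (h.openTriple (n - (i + 2)) (by omega)).symm
    rwa [show n - (i + 2) + 2 = n - i by omega,
      show n - (i + 2) + 1 = n - (i + 1) by omega] at this

theorem DConnected.symm (h : D.DConnected S x y) : D.DConnected S y x := by
  obtain ⟨n, f, rfl, rfl, hf⟩ := h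
  exact ⟨n, fun k => f (n - k), rfl, congrArg f (Nat.sub_self n), hf.reverse⟩

theorem DConnected.exists_shortestActiveWalk (h : D.DConnected S x y) :
    ∃ (n : ℕ) (f : ℕ → V), f 0 = x ∧ f n = y ∧ D.ShortestActiveWalk S n f := by
  classical
  obtain ⟨f, rfl, hn, hf⟩ := Nat.find_spec h
  exact ⟨_, f, rfl, hn, hf, fun m g h0 hm hg => Nat.find_min' h ⟨g, h0, hm.trans hn, hg⟩⟩

theorem ActiveWalk.skipAfter {i d : ℕ} (h : D.ActiveWalk S n f)
    (adj : D.Adj (f i) (f (i + d + 1)))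
    (left : ∀ k, k + 1 = i → D.OpenTriple S (f k) (f i) (f (i + d + 1)))
    (right : i + d + 1 < n → D.OpenTriple S (f i) (f (i + d + 1)) (f (i + d + 2))) :
    D.ActiveWalk S (n - d) (skipAfter f i d) where
  adj := chain_skipAfter h.adj adj
  openTriple k hk := by
    rcases lt_trichotomy (k + 1) i with hki | rfl | hik
    · rw [skipAfter_of_le f (by omega), skipAfter_of_le f hki.le, skipAfter_of_le f (by omega)]
      exact h.openTriple k (by omega)
    · rw [skipAfter_of_le f (by omega), skipAfter_of_le f le_rfl, skipAfter_of_lt f (by omega),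
        show k + 2 + d = k + 1 + d + 1 by omega]
      exact left k rfl
    · rw [skipAfter_of_lt f hik, skipAfter_of_lt f (show i < k + 2 by omega),
        Nat.add_right_comm k 1, Nat.add_right_comm k 2]
      obtain rfl | hik := (Nat.lt_succ_iff.1 hik).eq_or_lt
      · rw [skipAfter_of_le f le_rfl]
        exact right (by omega)
      · rw [skipAfter_of_lt f hik]
        exact h.openTriple (k + d) (by omega)

theorem ShortestActiveWalk.not_skip {i d : ℕ} (h : D.ShortestActiveWalk S n f) (hd : 0 < d)
    (hid : i + d < n) (adj : D.Adj (f i) (f (i + d + 1)))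
    (left : ∀ k, k + 1 = i → D.OpenTriple S (f k) (f i) (f (i + d + 1)))
    (right : i + d + 1 < n → D.OpenTriple S (f i) (f (i + d + 1)) (f (i + d + 2))) : False := by
  have := h.le_length (n - d) (_root_.skipAfter f i d) (skipAfter_of_le f i.zero_le)
    (by rw [skipAfter_of_lt f (by omega), Nat.sub_add_cancel (by omega)])
    (h.toActiveWalk.skipAfter adj left right)
  omega

/-- A walk leaving a non-ancestor of `S` can only turn at a collider, which would be an ancestor
of `S`; hence it never turns. -/
theorem ActiveWalk.directed_of_not_anc {i : ℕ} (h : D.ActiveWalk S n f)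
    (hi : D.edge (f i) (f (i + 1))) (hS : ∀ s ∈ S, ¬ D.Anc (f i) s) (k : ℕ) (hk : i + k < n) :
    D.Anc (f i) (f (i + k)) ∧ D.edge (f (i + k)) (f (i + k + 1)) := by
  induction k with
  | zero => exact ⟨.refl, hi⟩
  | succ k ih =>
    obtain ⟨hanc, hedge⟩ := ih (by omega)
    have hanc' : D.Anc (f i) (f (i + (k + 1))) := hanc.tail hedge
    refine ⟨hanc', (h.adj _ hk).resolve_right fun hback => ?_⟩
    obtain ⟨s, hs, hvs⟩ := (h.openTriple (i + k) hk).1 ⟨hedge, hback⟩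
    exact hS s hs (hanc'.trans hvs)

theorem ActiveWalk.openTriple_of_eq {k j : ℕ} (h : D.ActiveWalk S n f) (hkj : k + 1 < j)
    (hj : j < n) (heq : f (k + 1) = f j) : D.OpenTriple S (f k) (f (k + 1)) (f (j + 1)) := by
  have open_left := h.openTriple k (by omega)
  refine ⟨fun ⟨hin, hback⟩ => ?_, fun hnc => ?_⟩
  · by_contra! hS
    rcases h.adj (k + 1) (by omega) with hout | hcol
    · have := (h.directed_of_not_anc hout hS (j - (k + 1)) (by omega)).2
      rw [Nat.add_sub_of_le hkj.le] at this
      exact D.asymm this (heq ▸ hback)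
    · obtain ⟨s, hs, hvs⟩ := open_left.1 ⟨hin, hcol⟩
      exact hS s hs hvs
  · by_cases hin : D.edge (f k) (f (k + 1))
    · obtain ⟨l, rfl⟩ : ∃ l, j = l + 1 := ⟨j - 1, by omega⟩
      rw [heq]
      exact (h.openTriple l hj).2 fun hc => hnc ⟨hin, heq ▸ hc.2⟩
    · exact open_left.2 fun hc => hin hc.1

theorem ShortestActiveWalk.injective {i j : ℕ} (h : D.ShortestActiveWalk S n f) (hij : i < j)
    (hj : j ≤ n) : f i ≠ f j := by
  intro heq
  rcases hj.eq_or_lt with rfl | hj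
  · have := h.le_length i f rfl heq (h.take hij.le)
    omega
  · refine h.not_skip (i := i) (d := j - i) (by omega) (by omega) ?_ ?_ ?_ <;>
      rw [Nat.add_sub_of_le hij.le]
    · exact heq ▸ h.adj j hj
    · rintro k rfl
      exact h.openTriple_of_eq hij hj heq
    · exact fun hj' => heq ▸ h.openTriple j hj'

end ActiveWalk

end Dag

/-! ### d-separation by walks -/

namespace GPath

variable {A : V → V → Prop} {D : Dag V} {x y : V}

/-- The nodes of a path as a sequence indexed by `ℕ`; only the values up to `p.n` matter. -/
def walk (p : GPath A x y) (k : ℕ) : V := p.f (Fin.ofNat (p.n + 1) k)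

/-- The path given by the first `n + 1` terms of a sequence. -/
def ofWalk (n : ℕ) (f : ℕ → V) (hinj : ∀ i j, i < j → j ≤ n → f i ≠ f j)
    (hadj : ∀ i < n, A (f i) (f (i + 1))) : GPath A (f 0) (f n) where
  n := n
  f i := f i
  inj := .of_lt_imp_ne fun i j hij => hinj i j hij (by omega)
  first := rfl
  last := rfl
  adj i := hadj i i.isLt

theorem walk_apply (p : GPath A x y) {k : ℕ} (hk : k < p.n + 1) : p.walk k = p.f ⟨k, hk⟩ :=
  congrArg p.f (Fin.ext (Nat.mod_eq_of_lt hk))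

theorem walk_ofWalk {n : ℕ} {f : ℕ → V} (hinj : ∀ i j, i < j → j ≤ n → f i ≠ f j)
    (hadj : ∀ i < n, A (f i) (f (i + 1))) {k : ℕ} (hk : k ≤ n) :
    (ofWalk n f hinj hadj).walk k = f k :=
  walk_apply _ (Nat.lt_succ_of_le hk)

theorem walk_zero (p : GPath A x y) : p.walk 0 = x := (p.walk_apply p.n.succ_pos).trans p.first

theorem walk_n (p : GPath A x y) : p.walk p.n = y :=
  (p.walk_apply p.n.lt_succ_self).trans p.last

theorem adj_walk (p : GPath A x y) {i : ℕ} (hi : i < p.n) : A (p.walk i) (p.walk (i + 1)) := by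
  rw [p.walk_apply (by omega), p.walk_apply (by omega)]
  exact p.adj ⟨i, hi⟩

theorem colliderAt_succ_iff (p : GPath A x y) {i : ℕ} (hi : i + 1 < p.n) :
    p.ColliderAt D.edge (i + 1) ↔ D.Collider (p.walk i) (p.walk (i + 1)) (p.walk (i + 2)) := by
  rw [p.walk_apply (by omega), p.walk_apply (by omega), p.walk_apply (by omega)]
  exact ⟨fun ⟨_, _, h⟩ => h, fun h => ⟨i.succ_pos, hi, h⟩⟩

theorem not_blocked_iff (p : GPath A x y) (S : Set V) :
    ¬ p.Blocked D S ↔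
      ∀ i, i + 1 < p.n → D.OpenTriple S (p.walk i) (p.walk (i + 1)) (p.walk (i + 2)) := by
  have open_iff {i : ℕ} (hi : i + 1 < p.n) :
      D.OpenTriple S (p.walk i) (p.walk (i + 1)) (p.walk (i + 2)) ↔
        ¬ ((¬ p.ColliderAt D.edge (i + 1) ∧ p.f ⟨i + 1, by omega⟩ ∈ S) ∨
          (p.ColliderAt D.edge (i + 1) ∧
            ∀ d : V, D.Anc (p.f ⟨i + 1, by omega⟩) d → d ∉ S)) := by
    rw [p.colliderAt_succ_iff hi, ← p.walk_apply, Dag.OpenTriple]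
    grind
  refine ⟨fun h i hi => (open_iff hi).2 fun hb => h ⟨i + 1, i.succ_pos, hi, hb⟩, ?_⟩
  rintro h ⟨_ | i, hpos, hi, hb⟩
  exacts [hpos.ne rfl, (open_iff hi).1 (h i hi) hb]

end GPath

namespace Dag

variable {D D' : Dag V} {S : Set V} {x y : V}

theorem not_dSep_iff : ¬ D.dSep x y S ↔ D.DConnected S x y := by
  constructor
  · intro h
    obtain ⟨p, hp⟩ := not_forall.1 h
    exact ⟨p.n, p.walk, p.walk_zero, p.walk_n, fun _ => p.adj_walk, (p.not_blocked_iff S).1 hp⟩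
  · intro h hsep
    obtain ⟨n, f, rfl, rfl, hf⟩ := h.exists_shortestActiveWalk
    refine ((GPath.ofWalk n f (fun _ _ => hf.injective) hf.adj).not_blocked_iff S).2
      (fun i hi => ?_) (hsep _)
    have hi : i + 1 < n := hi
    rw [GPath.walk_ofWalk _ _ (by omega), GPath.walk_ofWalk _ _ hi.le, GPath.walk_ofWalk _ _ hi]
    exact hf.openTriple i hi

theorem dSep.symm (h : D.dSep x y S) : D.dSep y x S :=
  not_not.1 fun h' => not_dSep_iff.2 (not_dSep_iff.1 h').symm h

theorem mequiv_of_dConnected_iff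
    (h : ∀ x y S, D.DConnected S x y ↔ D'.DConnected S x y) : D.MEquiv D' :=
  fun x y S => by rw [← not_iff_not, not_dSep_iff, not_dSep_iff, h]

end Dag

/-! ### The theorem of Verma and Pearl -/

namespace Dag

variable {D D' D'' : Dag V} {S : Set V} {x y z : V}

theorem Anc.antisymm (hxy : D.Anc x y) (hyx : D.Anc y x) : x = y := by
  rcases hxy.cases_head with rfl | ⟨c, hxc, hcy⟩
  exacts [rfl, absurd (hcy.trans hyx) (D.acyclic x c hxc)]

theorem dSep_pa (hne : x ≠ y) (hadj : ¬ D.Adj x y) (hanc : ¬ D.Anc x y) : D.dSep x y (D.Pa x) := by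
  refine not_not.1 fun hsep => ?_
  obtain ⟨n, f, rfl, rfl, hf⟩ := not_dSep_iff.1 hsep
  have hn0 : n ≠ 0 := fun h => hne (by rw [h])
  have hn1 : n ≠ 1 := fun h => hadj (by simpa only [h] using hf.adj 0 (by omega))
  rcases hf.adj 0 (by omega) with hout | hin
  · have hdir := hf.directed_of_not_anc hout (fun s hs => D.acyclic s _ hs) (n - 1) (by omega)
    rw [show 0 + (n - 1) + 1 = n by omega] at hdir
    exact hanc (hdir.1.tail hdir.2)
  · exact (hf.openTriple 0 (by omega)).2 (fun hc => D.asymm hc.1 hin) hin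

theorem adj_iff_forall_not_dSep : D.Adj x y ↔ x ≠ y ∧ ∀ S, ¬ D.dSep x y S := by
  refine ⟨fun h => ⟨h.ne, fun S => not_dSep_iff.2 ?_⟩, fun ⟨hne, hsep⟩ => ?_⟩
  · exact ⟨1, fun | 0 => x | _ => y, rfl, rfl, fun | 0, _ => h, fun i hi => by omega⟩
  · by_contra hadj
    refine hsep _ (dSep_pa hne hadj fun hxy => ?_)
    exact hsep _ (dSep_pa hne.symm (mt Adj.symm hadj) fun hyx => hne (hxy.antisymm hyx)).symm

theorem DConnected.of_openTriple (hxy : D.Adj x y) (hyz : D.Adj y z) (h : D.OpenTriple S x y z) :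
    D.DConnected S x z :=
  ⟨2, fun | 0 => x | 1 => y | _ => z, rfl, rfl, fun | 0, _ => hxy | 1, _ => hyz,
    fun | 0, _ => h⟩

/-- A v-structure `x → y ← z`: a collider whose two outer nodes are distinct and not adjacent. -/
structure IsVStructure (D : Dag V) (x y z : V) : Prop where
  ne : x ≠ z
  not_adj : ¬ D.Adj x z
  collider : D.Collider x y z

theorem IsVStructure.symm (h : D.IsVStructure x y z) : D.IsVStructure z y x :=
  ⟨h.ne.symm, mt Adj.symm h.not_adj, h.collider.symm⟩

theorem isVStructure_iff_forall_dSep :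
    D.IsVStructure x y z ↔
      x ≠ z ∧ ¬ D.Adj x z ∧ D.Adj x y ∧ D.Adj z y ∧ ∀ S, D.dSep x z S → y ∉ S := by
  constructor
  · rintro ⟨hne, hadj, hc⟩
    refine ⟨hne, hadj, .inl hc.1, .inl hc.2, fun S hsep hy => not_dSep_iff.2 ?_ hsep⟩
    exact .of_openTriple (.inl hc.1) (.inr hc.2) ⟨fun _ => ⟨y, hy, .refl⟩, fun hnc => absurd hc hnc⟩
  · rintro ⟨hne, hadj, hxy, hzy, hsep⟩
    obtain ⟨S, hS⟩ : ∃ S, D.dSep x z S := by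
      by_contra! h
      exact hadj (adj_iff_forall_not_dSep.2 ⟨hne, h⟩)
    refine ⟨hne, hadj, not_not.1 fun hnc => not_dSep_iff.2 ?_ hS⟩
    exact .of_openTriple hxy hzy.symm ⟨fun hc => absurd hc hnc, fun _ => hsep S hS⟩

/-- Two DAGs have the same pattern in the sense of Verma and Pearl: the same adjacencies and the
same v-structures. -/
structure PatternEquiv (D D' : Dag V) : Prop where
  adj_iff : ∀ x y, D.Adj x y ↔ D'.Adj x y
  isVStructure_iff : ∀ x y z, D.IsVStructure x y z ↔ D'.IsVStructure x y z

theorem PatternEquiv.refl (D : Dag V) : D.PatternEquiv D := ⟨fun _ _ => .rfl, fun _ _ _ => .rfl⟩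

theorem PatternEquiv.symm (h : D.PatternEquiv D') : D'.PatternEquiv D :=
  ⟨fun x y => (h.adj_iff x y).symm, fun x y z => (h.isVStructure_iff x y z).symm⟩

theorem PatternEquiv.trans (h : D.PatternEquiv D') (h' : D'.PatternEquiv D'') :
    D.PatternEquiv D'' :=
  ⟨fun x y => (h.adj_iff x y).trans (h'.adj_iff x y),
    fun x y z => (h.isVStructure_iff x y z).trans (h'.isVStructure_iff x y z)⟩

theorem MEquiv.patternEquiv (h : D.MEquiv D') : D.PatternEquiv D' := by
  have adj_iff (x y : V) : D.Adj x y ↔ D'.Adj x y := by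
    simp only [adj_iff_forall_not_dSep, h x y]
  refine ⟨adj_iff, fun x y z => ?_⟩
  simp only [isVStructure_iff_forall_dSep, adj_iff, h x z]

end Dag

namespace Dag

variable {D D' : Dag V} {S : Set V} {u w x y : V}

section ShortestActiveWalk

variable {n i : ℕ} {f : ℕ → V}

theorem ShortestActiveWalk.reverse (h : D.ShortestActiveWalk S n f) :
    D.ShortestActiveWalk S n fun k => f (n - k) where
  toActiveWalk := h.toActiveWalk.reverse
  le_length m g h0 hm hg := by
    refine h.le_length m (fun k => g (m - k)) ?_ ?_ hg.reverse
    · simpa only [Nat.sub_zero, Nat.sub_self] using hm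
    · simpa only [Nat.sub_zero, Nat.sub_self] using h0

theorem ShortestActiveWalk.collider_left_of_shortcut (h : D.ShortestActiveWalk S n f)
    (hi : i + 2 ≤ n) (hshort : D.edge (f i) (f (i + 2))) :
    ∃ k, k + 1 = i ∧ D.Collider (f k) (f i) (f (i + 1)) := by
  by_contra! hnc
  refine h.not_skip (i := i) one_pos (by omega) (.inl hshort) ?_ fun hi' => ⟨?_, fun hnc' => ?_⟩
  · rintro k rfl
    exact ⟨fun hc => absurd hc.2 (D.asymm hshort),
      fun _ => (h.openTriple k (by omega)).2 (hnc k rfl)⟩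
  · rintro ⟨-, hzw⟩
    by_cases hvw : D.edge (f (i + 1)) (f (i + 2))
    · exact (h.openTriple (i + 1) hi').1 ⟨hvw, hzw⟩
    · have hwv := (h.adj (i + 1) (by omega)).resolve_left hvw
      have huv := (h.adj i (by omega)).edge_of_anc ((ReflTransGen.single hshort).tail hwv)
      obtain ⟨s, hs, hvs⟩ := (h.openTriple i (by omega)).1 ⟨huv, hwv⟩
      exact ⟨s, hs, hvs.head hwv⟩
  · exact (h.openTriple (i + 1) hi').2 fun hc => hnc' ⟨hshort, hc.2⟩

theorem ShortestActiveWalk.collider_right_of_shortcut (h : D.ShortestActiveWalk S n f)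
    (hi : i + 2 ≤ n) (hshort : D.edge (f (i + 2)) (f i)) :
    i + 2 < n ∧ D.Collider (f (i + 1)) (f (i + 2)) (f (i + 3)) := by
  have hsub : n - (n - (i + 2)) = i + 2 := by omega
  obtain ⟨k, hk, hc⟩ := h.reverse.collider_left_of_shortcut (i := n - (i + 2)) (by omega)
    (by rwa [hsub, show n - (n - (i + 2) + 2) = i by omega])
  rw [hsub, show n - k = i + 3 by omega, show n - (n - (i + 2) + 1) = i + 1 by omega] at hc
  exact ⟨by omega, hc.symm⟩

theorem ShortestActiveWalk.collider_of_adj (h : D.ShortestActiveWalk S n f) (hi : i + 2 ≤ n)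
    (hadj : D.Adj (f i) (f (i + 2))) :
    (∃ k, k + 1 = i ∧ D.Collider (f k) (f i) (f (i + 1))) ∨
      (i + 2 < n ∧ D.Collider (f (i + 1)) (f (i + 2)) (f (i + 3))) :=
  hadj.imp (h.collider_left_of_shortcut hi) (h.collider_right_of_shortcut hi)

theorem ShortestActiveWalk.isVStructure_of_collider (h : D.ShortestActiveWalk S n f)
    (hi : i + 2 ≤ n) (hc : D.Collider (f i) (f (i + 1)) (f (i + 2))) :
    D.IsVStructure (f i) (f (i + 1)) (f (i + 2)) := by
  refine ⟨h.injective (by omega) hi, fun hadj => ?_, hc⟩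
  rcases h.collider_of_adj hi hadj with ⟨_, _, hc'⟩ | ⟨_, hc'⟩
  exacts [D.asymm hc.1 hc'.2, D.asymm hc.2 hc'.1]

theorem ShortestActiveWalk.collider_iff (h : D.ShortestActiveWalk S n f)
    (hpat : D.PatternEquiv D') (hi : i + 2 ≤ n) :
    D.Collider (f i) (f (i + 1)) (f (i + 2)) ↔ D'.Collider (f i) (f (i + 1)) (f (i + 2)) := by
  refine ⟨fun hc => ?_, fun hc => ?_⟩
  · exact ((hpat.isVStructure_iff _ _ _).1 (h.isVStructure_of_collider hi hc)).collider
  · refine ((hpat.isVStructure_iff _ _ _).2 ⟨h.injective (by omega) hi, ?_, hc⟩).collider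
    rw [← hpat.adj_iff]
    intro hadj
    rcases h.collider_of_adj hi hadj with ⟨k, rfl, hc'⟩ | ⟨hi', hc'⟩
    · have hv := (hpat.isVStructure_iff _ _ _).1 (h.isVStructure_of_collider (by omega) hc')
      exact D'.asymm hc.1 hv.collider.2
    · have hv := (hpat.isVStructure_iff _ _ _).1 (h.isVStructure_of_collider hi' hc')
      exact D'.asymm hc.2 hv.collider.1

end ShortestActiveWalk

theorem directed_of_no_collider {n : ℕ} {f : ℕ → V} (hadj : ∀ i < n, D.Adj (f i) (f (i + 1)))
    (hnc : ∀ i, i + 1 < n → ¬ D.Collider (f i) (f (i + 1)) (f (i + 2)))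
    (h0 : D.edge (f 0) (f 1)) : ∀ i < n, D.edge (f i) (f (i + 1)) := by
  intro i hi
  induction i with
  | zero => exact h0
  | succ i ih => exact (hadj (i + 1) hi).resolve_right fun h => hnc i hi ⟨ih (by omega), h⟩

theorem PatternEquiv.not_collider_of_directed (hpat : D.PatternEquiv D') {v : V}
    (huv : D.edge u v) (hvw : D.edge v w) (hadj : ¬ D.Adj u w) : ¬ D'.Collider u v w := by
  intro hc
  have hne : u ≠ w := fun h => D.asymm huv (h ▸ hvw)
  have hv := (hpat.isVStructure_iff u v w).2 ⟨hne, mt (hpat.adj_iff u w).2 hadj, hc⟩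
  exact D.asymm hvw hv.collider.2

/-- Follow the chain below an unshielded collider: as long as its nodes are children of both `u`
and `w` they are colliders themselves, and from then on the chain keeps its direction in `D'`. -/
theorem PatternEquiv.exists_collider_anc (hpat : D.PatternEquiv D') (hne : u ≠ w)
    (huw : ¬ D.Adj u w) {n : ℕ} {f : ℕ → V} (hf : ∀ i < n, D.edge (f i) (f (i + 1)))
    (hind : ∀ i, i + 2 ≤ n → ¬ D.edge (f i) (f (i + 2))) (hc : D.Collider u (f 0) w) :
    ∃ v, D'.Collider u v w ∧ D'.Anc v (f n) := by
  have hc' := ((hpat.isVStructure_iff u (f 0) w).1 ⟨hne, huw, hc⟩).collider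
  induction n generalizing f with
  | zero => exact ⟨f 0, hc', .refl⟩
  | succ n ih =>
    have h01 := hf 0 (by omega)
    by_cases hboth : D.Adj u (f 1) ∧ D.Adj w (f 1)
    · have hc1 : D.Collider u (f 1) w :=
        ⟨hboth.1.edge_of_anc ((ReflTransGen.single hc.1).tail h01),
          hboth.2.edge_of_anc ((ReflTransGen.single hc.2).tail h01)⟩
      exact ih (f := fun i => f (i + 1)) (fun i hi => hf (i + 1) (by omega))
        (fun i hi => hind (i + 1) (by omega)) hc1
        ((hpat.isVStructure_iff u (f 1) w).1 ⟨hne, huw, hc1⟩).collider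
    · have h01' : D'.edge (f 0) (f 1) := by
        refine ((hpat.adj_iff _ _).1 (.inl h01)).resolve_right fun hback => ?_
        rcases not_and_or.1 hboth with hu | hw
        · exact hpat.not_collider_of_directed hc.1 h01 hu ⟨hc'.1, hback⟩
        · exact hpat.not_collider_of_directed hc.2 h01 hw ⟨hc'.2, hback⟩
      have hadj (i : ℕ) (hi : i + 2 ≤ n + 1) : ¬ D.Adj (f i) (f (i + 2)) := fun hadj =>
        hind i hi <| hadj.edge_of_anc <|
          (ReflTransGen.single (hf i (by omega))).tail (hf (i + 1) (by omega))
      refine ⟨f 0, hc', reflTransGen_of_chain <| directed_of_no_collider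
        (fun i hi => (hpat.adj_iff _ _).1 (.inl (hf i hi))) (fun i hi => ?_) h01'⟩
      exact hpat.not_collider_of_directed (hf i (by omega)) (hf (i + 1) hi) (hadj i hi)

theorem ShortestActiveWalk.exists_open_collider {n i : ℕ} {f : ℕ → V}
    (h : D.ShortestActiveWalk S n f) (hpat : D.PatternEquiv D') (hi : i + 2 ≤ n)
    (hc : D.Collider (f i) (f (i + 1)) (f (i + 2))) :
    ∃ v, D'.Collider (f i) v (f (i + 2)) ∧ ∃ s ∈ S, D'.Anc v s := by
  have hv := h.isVStructure_of_collider hi hc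
  obtain ⟨s, hs, hanc⟩ := (h.openTriple i (by omega)).1 hc
  obtain ⟨m, g, hg0, rfl, hg, -, hind⟩ := exists_induced_chain hanc
  obtain ⟨v, hv, hvs⟩ := hpat.exists_collider_anc hv.ne hv.not_adj hg
    (fun i hi => hind i (i + 2) (by omega) hi) (hg0 ▸ hc)
  exact ⟨v, hv, g m, hs, hvs⟩

/-- Position `i` of the walk `f 0, …, f n` is an inner one and carries a collider. -/
def ColliderOn (D : Dag V) (n : ℕ) (f : ℕ → V) (i : ℕ) : Prop :=
  0 < i ∧ i < n ∧ D.Collider (f (i - 1)) (f i) (f (i + 1))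

theorem ColliderOn.not_succ {n i : ℕ} {f : ℕ → V} (h : D.ColliderOn n f i) :
    ¬ D.ColliderOn n f (i + 1) :=
  fun h' => D.asymm h.2.2.2 h'.2.2.1

theorem ShortestActiveWalk.exists_open_node {n : ℕ} {f : ℕ → V}
    (h : D.ShortestActiveWalk S n f) (hpat : D.PatternEquiv D') (i : ℕ) :
    ∃ v, (¬ D.ColliderOn n f i → v = f i) ∧ (D.ColliderOn n f i →
      D'.Collider (f (i - 1)) v (f (i + 1)) ∧ ∃ s ∈ S, D'.Anc v s) := by
  by_cases hcoll : D.ColliderOn n f i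
  · obtain ⟨k, rfl⟩ : ∃ k, i = k + 1 := ⟨i - 1, (Nat.sub_add_cancel hcoll.1).symm⟩
    obtain ⟨v, hv⟩ := h.exists_open_collider hpat hcoll.2.1 hcoll.2.2
    exact ⟨v, fun h => absurd hcoll h, fun _ => hv⟩
  · exact ⟨f i, fun _ => rfl, fun h => absurd h hcoll⟩

/-- In a shortest active walk of `D`, replace each collider by one of `D'` that has the same two
neighbours and is an ancestor of `S` in `D'`. -/
theorem PatternEquiv.dConnected (hpat : D.PatternEquiv D') (h : D.DConnected S x y) :
    D'.DConnected S x y := by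
  obtain ⟨n, f, rfl, rfl, hf⟩ := h.exists_shortestActiveWalk
  choose g g_eq g_coll using hf.exists_open_node hpat
  refine ⟨n, g, g_eq 0 fun h => h.1.ne rfl, g_eq n fun h => h.2.1.ne rfl,
    fun i hi => ?_, fun i hi => ?_⟩
  · by_cases h : D.ColliderOn n f i
    · rw [g_eq (i + 1) h.not_succ]
      exact .inr (g_coll i h).1.2
    · rw [g_eq i h]
      by_cases h' : D.ColliderOn n f (i + 1)
      · exact .inl (g_coll (i + 1) h').1.1
      · rw [g_eq (i + 1) h', ← hpat.adj_iff]
        exact hf.adj i hi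
  · by_cases h : D.ColliderOn n f (i + 1)
    · obtain ⟨hc, hs⟩ := g_coll (i + 1) h
      rw [g_eq i fun h' => h'.not_succ h, g_eq (i + 2) h.not_succ]
      exact ⟨fun _ => hs, fun hnc => absurd hc hnc⟩
    · have hnc : ¬ D.Collider (f i) (f (i + 1)) (f (i + 2)) := fun hc => h ⟨i.succ_pos, hi, hc⟩
      rw [g_eq (i + 1) h]
      refine ⟨fun hc => absurd hc fun ⟨hl, hr⟩ => ?_, fun _ => (hf.openTriple i hi).2 hnc⟩
      by_cases hi0 : D.ColliderOn n f i
      · exact D'.asymm hl (g_coll i hi0).1.2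
      by_cases hi2 : D.ColliderOn n f (i + 2)
      · exact D'.asymm hr (g_coll (i + 2) hi2).1.1
      rw [g_eq i hi0] at hl
      rw [g_eq (i + 2) hi2] at hr
      exact hnc ((hf.collider_iff hpat hi).2 ⟨hl, hr⟩)

theorem mequiv_iff_patternEquiv : D.MEquiv D' ↔ D.PatternEquiv D' :=
  ⟨MEquiv.patternEquiv, fun h => mequiv_of_dConnected_iff fun _ _ _ =>
    ⟨h.dConnected, h.symm.dConnected⟩⟩

end Dag

/-! ### Reorienting a set of nodes with common outside parents -/

namespace Dag

variable {D D' F : Dag V} {C T : Set V} {x y z : V}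

/-- The subgraph of `D` induced by `T`, with the nodes outside `T` kept as isolated ones. -/
def restrict (D : Dag V) (T : Set V) : Dag V where
  edge a b := a ∈ T ∧ b ∈ T ∧ D.edge a b
  acyclic a b h hba := D.acyclic a b h.2.2 (ReflTransGen.mono (fun _ _ h => h.2.2) _ _ hba)

theorem restrict_adj_iff : (D.restrict T).Adj x y ↔ x ∈ T ∧ y ∈ T ∧ D.Adj x y := by
  simp only [Adj, restrict]
  tauto

theorem restrict_isVStructure_iff :
    (D.restrict T).IsVStructure x y z ↔ x ∈ T ∧ y ∈ T ∧ z ∈ T ∧ D.IsVStructure x y z := by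
  constructor
  · rintro ⟨hne, hadj, hx, hz⟩
    exact ⟨hx.1, hx.2.1, hz.1, hne, fun h => hadj (restrict_adj_iff.2 ⟨hx.1, hz.1, h⟩),
      hx.2.2, hz.2.2⟩
  · rintro ⟨hx, hy, hz, hne, hadj, hxy, hzy⟩
    exact ⟨hne, fun h => hadj (restrict_adj_iff.1 h).2.2, ⟨hx, hy, hxy⟩, ⟨hz, hy, hzy⟩⟩

theorem PatternEquiv.restrict (h : D.PatternEquiv D') (T : Set V) :
    (D.restrict T).PatternEquiv (D'.restrict T) where
  adj_iff x y := by rw [restrict_adj_iff, restrict_adj_iff, h.adj_iff]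
  isVStructure_iff x y z := by
    rw [restrict_isVStructure_iff, restrict_isVStructure_iff, h.isVStructure_iff]

theorem PatternEquiv.mem_of_edge (h : (D.restrict C).PatternEquiv F) (hxy : F.edge x y) :
    x ∈ C ∧ y ∈ C :=
  have hadj := restrict_adj_iff.1 ((h.adj_iff x y).2 (.inl hxy))
  ⟨hadj.1, hadj.2.1⟩

theorem not_transGen_self (D : Dag V) (a : V) : ¬ TransGen D.edge a a := fun h =>
  have ⟨b, hab, hba⟩ := TransGen.head'_iff.1 h
  D.acyclic a b hab hba

/-- Every parent outside `C` of a node of `C` is a parent of all nodes of `C`. -/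
def ParentsShared (D : Dag V) (C : Set V) : Prop :=
  ∀ p ∉ C, ∀ v ∈ C, D.edge p v → ∀ w ∈ C, D.edge p w

/-- The edges of `D` after those inside `C` have been replaced by the edges of `F`. -/
def ReorientEdge (D : Dag V) (C : Set V) (F : Dag V) (x y : V) : Prop :=
  F.edge x y ∨ D.edge x y ∧ ¬ (x ∈ C ∧ y ∈ C)

/-- Edges of `F` need not agree with directed paths of `D`, so an induction along the new edges has
to carry all nodes of `C` at once; it can, because they share their parents outside `C`. -/
theorem transGen_of_transGen_reorientEdge (hC : D.ParentsShared C)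
    (hF : (D.restrict C).PatternEquiv F) (hx : x ∉ C) (h : TransGen (D.ReorientEdge C F) x y) :
    ∀ w, w = y ∨ w ∈ C ∧ y ∈ C → TransGen D.edge x w := by
  induction h with
  | single hxy =>
    have hxy := (hxy.resolve_left fun h => hx (hF.mem_of_edge h).1).1
    rintro w (rfl | ⟨hw, hy⟩)
    exacts [.single hxy, .single (hC _ hx _ hy hxy w hw)]
  | @tail y z _ hyz ih =>
    rcases hyz with hyz | ⟨hyz, hnot⟩
    · have hmem := hF.mem_of_edge hyz
      rintro w (rfl | hw)
      exacts [ih _ (.inr ⟨hmem.2, hmem.1⟩), ih w (.inr ⟨hw.1, hmem.1⟩)]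
    · rintro w (rfl | ⟨hw, hz⟩)
      · exact (ih y (.inl rfl)).tail hyz
      · exact (ih y (.inl rfl)).tail (hC y (fun hy => hnot ⟨hy, hz⟩) z hz hyz w hw)

theorem transGen_or_exists_notMem (h : TransGen (D.ReorientEdge C F) x y) :
    TransGen F.edge x y ∨ ∃ q ∉ C, ReflTransGen (D.ReorientEdge C F) x q ∧
      ReflTransGen (D.ReorientEdge C F) q y := by
  induction h with
  | single hxy =>
    rcases id hxy with hxy' | ⟨-, hnot⟩
    · exact .inl (.single hxy')
    · rcases not_and_or.1 hnot with hx | hy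
      exacts [.inr ⟨_, hx, .refl, .single hxy⟩, .inr ⟨_, hy, .single hxy, .refl⟩]
  | tail hxy hyz ih =>
    rcases ih with hF | ⟨q, hq, hxq, hqy⟩
    · rcases id hyz with hyz' | ⟨-, hnot⟩
      · exact .inl (hF.tail hyz')
      · rcases not_and_or.1 hnot with hy | hz
        · exact .inr ⟨_, hy, hxy.to_reflTransGen, .single hyz⟩
        · exact .inr ⟨_, hz, hxy.to_reflTransGen.tail hyz, .refl⟩
    · exact .inr ⟨q, hq, hxq, hqy.tail hyz⟩

/-- The DAG `D` with its edges inside `C` replaced by those of `F`. -/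
def reorient (D : Dag V) (C : Set V) (F : Dag V) (hC : D.ParentsShared C)
    (hF : (D.restrict C).PatternEquiv F) : Dag V where
  edge := D.ReorientEdge C F
  acyclic a b hab hba := by
    have hcycle := TransGen.head' hab hba
    rcases transGen_or_exists_notMem hcycle with hcycleF | ⟨q, hq, haq, hqa⟩
    · exact F.not_transGen_self a hcycleF
    · exact D.not_transGen_self q <| transGen_of_transGen_reorientEdge hC hF hq
        ((hcycle.trans_right hqa).trans_left haq) q (.inl rfl)

section Reorient

variable (hC : D.ParentsShared C) (hF : (D.restrict C).PatternEquiv F)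

theorem reorient_edge_iff_of_mem (hx : x ∈ C) (hy : y ∈ C) :
    (D.reorient C F hC hF).edge x y ↔ F.edge x y :=
  or_iff_left fun h => h.2 ⟨hx, hy⟩

theorem reorient_edge_iff_of_notMem (h : ¬ (x ∈ C ∧ y ∈ C)) :
    (D.reorient C F hC hF).edge x y ↔ D.edge x y :=
  (or_iff_right fun hxy => h (hF.mem_of_edge hxy)).trans (and_iff_left h)

theorem reorient_adj_iff : (D.reorient C F hC hF).Adj x y ↔ D.Adj x y := by
  by_cases h : x ∈ C ∧ y ∈ C
  · simp only [Adj, reorient_edge_iff_of_mem hC hF h.1 h.2, reorient_edge_iff_of_mem hC hF h.2 h.1]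
    exact (hF.adj_iff x y).symm.trans <|
      restrict_adj_iff.trans ⟨fun hxy => hxy.2.2, fun hxy => ⟨h.1, h.2, hxy⟩⟩
  · simp only [Adj, reorient_edge_iff_of_notMem hC hF h,
      reorient_edge_iff_of_notMem hC hF (mt And.symm h)]

theorem reorient_collider_iff (hne : x ≠ z) (hadj : ¬ D.Adj x z) :
    (D.reorient C F hC hF).Collider x y z ↔ D.Collider x y z := by
  have no_outer_parent {u w : V} (hu : u ∈ C) (hy : y ∈ C) (hw : w ∉ C) (huw : ¬ D.Adj u w) :
      ¬ D.edge w y := fun h => huw (.inr (hC w hw y hy h u hu))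
  by_cases hxy : x ∈ C ∧ y ∈ C <;> by_cases hzy : z ∈ C ∧ y ∈ C
  · have hv := hF.isVStructure_iff x y z
    rw [restrict_isVStructure_iff] at hv
    have hadjF : ¬ F.Adj x z := fun h => hadj (restrict_adj_iff.1 ((hF.adj_iff x z).2 h)).2.2
    rw [Collider, reorient_edge_iff_of_mem hC hF hxy.1 hxy.2,
      reorient_edge_iff_of_mem hC hF hzy.1 hzy.2]
    exact ⟨fun h => (hv.2 ⟨hne, hadjF, h⟩).2.2.2.collider,
      fun h => (hv.1 ⟨hxy.1, hxy.2, hzy.1, hne, hadj, h⟩).collider⟩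
  · have hz := no_outer_parent hxy.1 hxy.2 (fun hz => hzy ⟨hz, hxy.2⟩) hadj
    rw [Collider, reorient_edge_iff_of_notMem hC hF hzy]
    exact iff_of_false (fun h => hz h.2) fun h => hz h.2
  · have hx := no_outer_parent hzy.1 hzy.2 (fun hx => hxy ⟨hx, hzy.2⟩) (mt Adj.symm hadj)
    rw [Collider, reorient_edge_iff_of_notMem hC hF hxy]
    exact iff_of_false (fun h => hx h.1) fun h => hx h.1
  · rw [Collider, reorient_edge_iff_of_notMem hC hF hxy, reorient_edge_iff_of_notMem hC hF hzy,
      Collider]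

theorem patternEquiv_reorient : D.PatternEquiv (D.reorient C F hC hF) where
  adj_iff _ _ := (reorient_adj_iff hC hF).symm
  isVStructure_iff _ _ _ :=
    ⟨fun h => ⟨h.ne, mt (reorient_adj_iff hC hF).1 h.not_adj,
      (reorient_collider_iff hC hF h.ne h.not_adj).2 h.collider⟩,
    fun h => have hadj := mt (reorient_adj_iff hC hF).2 h.not_adj
      ⟨h.ne, hadj, (reorient_collider_iff hC hF h.ne hadj).1 h.collider⟩⟩

end Reorient

end Dag

namespace Dag

open Filter

variable {D D' : Dag V} {C Q : Set V} {v x y z : V}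

/-- A set of nodes closed under taking parents. -/
def IsAncestral (D : Dag V) (Q : Set V) : Prop := ∀ q ∈ Q, ∀ p, D.edge p q → p ∈ Q

theorem IsAncestral.parentsShared (h : D.IsAncestral C) : D.ParentsShared C :=
  fun p hp w hw hpw => absurd (h w hw p hpw) hp

/-- The set of all ancestors of nodes in `Q`. -/
def ancestors (D : Dag V) (Q : Set V) : Set V := {w | ∃ q ∈ Q, D.Anc w q}

theorem subset_ancestors : Q ⊆ D.ancestors Q := fun q hq => ⟨q, hq, .refl⟩

theorem isAncestral_ancestors : D.IsAncestral (D.ancestors Q) :=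
  fun _ ⟨q, hq, hanc⟩ _ hp => ⟨q, hq, hanc.head hp⟩

theorem notMem_ancestors_pa : v ∉ D.ancestors (D.Pa v) :=
  fun ⟨p, hp, hanc⟩ => D.acyclic p v hp hanc

/-- The DAG whose edges go upwards with respect to `key`. -/
def ofKey {α : Type*} [Preorder α] (key : V → α) : Dag V where
  edge a b := key a < key b
  acyclic a b hab hba := by
    have le_of_reflTransGen {c : V} (h : ReflTransGen (key · < key ·) b c) : key b ≤ key c := by
      induction h with
      | refl => exact le_rfl
      | tail _ hyz ih => exact ih.trans (le_of_lt hyz)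
    exact (le_of_reflTransGen hba).not_gt hab

theorem patternEquiv_restrict_of_pairwise_adj (hD : C.Pairwise D.Adj) (hD' : C.Pairwise D'.Adj) :
    (D.restrict C).PatternEquiv (D'.restrict C) where
  adj_iff x y := by
    rw [restrict_adj_iff, restrict_adj_iff]
    exact ⟨fun ⟨hx, hy, h⟩ => ⟨hx, hy, hD' hx hy h.ne⟩, fun ⟨hx, hy, h⟩ => ⟨hx, hy, hD hx hy h.ne⟩⟩
  isVStructure_iff x y z := by
    rw [restrict_isVStructure_iff, restrict_isVStructure_iff]
    exact iff_of_false (fun ⟨hx, _, hz, h⟩ => h.not_adj (hD hx hz h.ne))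
      fun ⟨hx, _, hz, h⟩ => h.not_adj (hD' hx hz h.ne)

theorem exists_isAncestral_of_subset_clique (hC : D.IsAncestral C) (hclique : C.Pairwise D.Adj)
    (hQC : Q ⊆ C) : ∃ D', D.PatternEquiv D' ∧ D'.IsAncestral Q := by
  obtain ⟨_, _⟩ := exists_wellFoundedLT V
  let key (x : V) : Prop ×ₗ V := toLex (x ∉ Q, x)
  have hkey : C.Pairwise (ofKey key).Adj := fun x _ y _ hne =>
    lt_or_gt_of_ne fun h => hne (congrArg (fun k => (ofLex k).2) h)
  have hF := patternEquiv_restrict_of_pairwise_adj hclique hkey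
  refine ⟨_, patternEquiv_reorient hC.parentsShared hF, fun q hq p hpq => ?_⟩
  rcases hpq with ⟨-, -, hlt⟩ | ⟨hpq, hnot⟩
  · rcases Prod.Lex.toLex_lt_toLex.1 hlt with hlt | ⟨heq, -⟩
    · exact (hlt.2 fun h => absurd hq h).elim
    · exact not_not.1 fun hp => (heq.mp hp) hq
  · exact absurd ⟨hC q (hQC hq) p hpq, hQC hq⟩ hnot

theorem exists_isAncestral_insert_pa (hpat : D.PatternEquiv D')
    (hpa : D'.IsAncestral (D.Pa v)) :
    ∃ F, D.PatternEquiv F ∧ F.IsAncestral (insert v (D.Pa v)) := by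
  have hA : D.IsAncestral (D.ancestors (D.Pa v)) := isAncestral_ancestors
  refine ⟨_, patternEquiv_reorient hA.parentsShared (hpat.restrict _), ?_⟩
  rintro q (rfl | hq) p (⟨-, hqA, hpq⟩ | ⟨hpq, hnot⟩)
  · exact absurd hqA notMem_ancestors_pa
  · exact .inr hpq
  · exact .inr (hpa q hq p hpq)
  · have hqA := subset_ancestors (D := D) hq
    exact absurd ⟨hA q hqA p hpq, hqA⟩ hnot

theorem pairwise_adj_insert_pa (h : ∀ x y z, ¬ D.IsVStructure x y z) (v : V) :
    (insert v (D.Pa v)).Pairwise D.Adj := by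
  rintro x (rfl | hx) y (rfl | hy) hne
  · exact absurd rfl hne
  · exact .inr hy
  · exact .inl hx
  · exact not_not.1 fun hadj => h x v y ⟨hne, hadj, hx, hy⟩

theorem exists_subset_insert_pa (hQ : Q.Finite) (hne : Q.Nonempty) (hclique : Q.Pairwise D.Adj) :
    ∃ v ∈ Q, Q ⊆ insert v (D.Pa v) := by
  obtain ⟨v, hv, hmax⟩ := hQ.exists_maximalFor (fun v => {w | D.Anc w v}) Q hne
  refine ⟨v, hv, fun q hq => or_iff_not_imp_left.2 fun hqv => ?_⟩
  refine (hclique hq hv hqv).resolve_right fun hvq => D.acyclic v q hvq ?_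
  exact hmax hq (fun w (hw : D.Anc w v) => hw.tail hvq) .refl

/-- Let `v` be the last node of `Q`. Its parents form a clique with fewer ancestors than `Q`. Once
they have been made ancestral, so is the clique `insert v (D.Pa v)`, which contains `Q` and can be
ordered at will. -/
theorem exists_isAncestral_of_clique (h : ∀ x y z, ¬ D.IsVStructure x y z)
    (hclique : Q.Pairwise D.Adj) (hfin : (D.ancestors Q).Finite) :
    ∃ D', D.PatternEquiv D' ∧ D'.IsAncestral Q := by
  induction hn : (D.ancestors Q).ncard using Nat.strong_induction_on generalizing Q with
  | _ n ih =>
    obtain rfl | hne := Q.eq_empty_or_nonempty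
    · exact ⟨D, .refl D, fun q hq => hq.elim⟩
    obtain ⟨v, hv, hQv⟩ := exists_subset_insert_pa (hfin.subset subset_ancestors) hne hclique
    have hlt : D.ancestors (D.Pa v) ⊂ D.ancestors Q :=
      Set.ssubset_iff_subset_ne.2 ⟨fun w ⟨p, hp, hanc⟩ => ⟨v, hv, hanc.tail hp⟩,
        fun heq => notMem_ancestors_pa (heq ▸ subset_ancestors hv)⟩
    have hclique_v := pairwise_adj_insert_pa h v
    obtain ⟨D₀, hD₀, hanc₀⟩ := ih _ (hn ▸ Set.ncard_lt_ncard hlt hfin)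
      (hclique_v.mono (Set.subset_insert _ _)) (hfin.subset hlt.subset) rfl
    obtain ⟨D₁, hD₁, hanc₁⟩ := exists_isAncestral_insert_pa hD₀ hanc₀
    obtain ⟨D₂, hD₂, hanc₂⟩ := exists_isAncestral_of_subset_clique hanc₁
      (hclique_v.mono' fun x y => (hD₁.adj_iff x y).1) hQv
    exact ⟨D₂, hD₁.trans hD₂, hanc₂⟩

section Ultralimit

variable {ι : Type*} (𝒰 : Ultrafilter ι) (E : ι → Dag V)

/-- The DAG whose edges are those of most members of a family of DAGs, as judged by an
ultrafilter. -/
def ultralimit : Dag V where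
  edge a b := ∀ᶠ i in 𝒰, (E i).edge a b
  acyclic a b hab hba := by
    have eventually_anc {c : V} (h : ReflTransGen (fun x y => ∀ᶠ i in 𝒰, (E i).edge x y) b c) :
        ∀ᶠ i in 𝒰, (E i).Anc b c := by
      induction h with
      | refl => exact .of_forall fun _ => .refl
      | tail _ hyz ih => exact (ih.and hyz).mono fun _ h => h.1.tail h.2
    obtain ⟨i, hab, hba⟩ := (hab.and (eventually_anc hba)).exists
    exact (E i).acyclic a b hab hba

theorem ultralimit_adj_iff : (ultralimit 𝒰 E).Adj x y ↔ ∀ᶠ i in 𝒰, (E i).Adj x y :=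
  Ultrafilter.eventually_or.symm

theorem ultralimit_isVStructure_iff :
    (ultralimit 𝒰 E).IsVStructure x y z ↔ ∀ᶠ i in 𝒰, (E i).IsVStructure x y z := by
  constructor
  · rintro ⟨hne, hadj, hxy, hzy⟩
    rw [ultralimit_adj_iff, ← Ultrafilter.eventually_not] at hadj
    exact (hadj.and (hxy.and hzy)).mono fun i h => ⟨hne, h.1, h.2⟩
  · intro h
    obtain ⟨_, hi⟩ := h.exists
    refine ⟨hi.ne, ?_, h.mono fun i h => h.collider.1, h.mono fun i h => h.collider.2⟩
    rw [ultralimit_adj_iff, ← Ultrafilter.eventually_not]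
    exact h.mono fun i h => h.not_adj

end Ultralimit

theorem exists_patternEquiv_of_finset {E : Finset V → Dag V}
    (hE : ∀ T : Finset V, (D.restrict T).PatternEquiv (E T)) :
    ∃ D', D.PatternEquiv D' ∧ ∀ x y, D'.edge x y → ∃ T, (E T).edge x y := by
  classical
  let 𝒰 : Ultrafilter (Finset V) := .of atTop
  have eventually_mem (x : V) : ∀ᶠ T : Finset V in 𝒰, x ∈ T :=
    Ultrafilter.of_le atTop <| (eventually_ge_atTop {x}).mono fun _ => Finset.singleton_subset_iff.1
  refine ⟨ultralimit 𝒰 E, ⟨fun x y => ?_, fun x y z => ?_⟩, fun x y h => h.exists⟩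
  · rw [ultralimit_adj_iff]
    refine eventually_const.symm.trans (eventually_congr ?_)
    filter_upwards [eventually_mem x, eventually_mem y] with T hx hy
    rw [← (hE T).adj_iff, restrict_adj_iff]
    exact ⟨fun h => ⟨hx, hy, h⟩, fun h => h.2.2⟩
  · rw [ultralimit_isVStructure_iff]
    refine eventually_const.symm.trans (eventually_congr ?_)
    filter_upwards [eventually_mem x, eventually_mem y, eventually_mem z] with T hx hy hz
    rw [← (hE T).isVStructure_iff, restrict_isVStructure_iff]
    exact ⟨fun h => ⟨hx, hy, hz, h⟩, fun h => h.2.2.2⟩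

theorem exists_patternEquiv_isRoot (h : ∀ x y z, ¬ D.IsVStructure x y z) (a : V) :
    ∃ D', D.PatternEquiv D' ∧ ∀ p, ¬ D'.edge p a := by
  have local_root (T : Finset V) :
      ∃ E, (D.restrict T).PatternEquiv E ∧ E.IsAncestral {a} := by
    refine exists_isAncestral_of_clique
      (fun x y z hv => h x y z (restrict_isVStructure_iff.1 hv).2.2.2)
      (Set.pairwise_singleton _ _) ((T.finite_toSet.insert a).subset ?_)
    rintro w ⟨_, rfl, hanc⟩
    rcases hanc.cases_head with rfl | ⟨_, hedge, -⟩
    exacts [.inl rfl, .inr hedge.1]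
  choose E hE hroot using local_root
  obtain ⟨D', hpat, hD'⟩ := exists_patternEquiv_of_finset hE
  refine ⟨D', hpat, fun p hp => ?_⟩
  obtain ⟨T, hT⟩ := hD' p a hp
  exact Adj.ne (.inl hT) (hroot T a rfl p hT)

end Dag

/-! ### Chain components and possibly directed paths -/

namespace Dag

variable {D D' : Dag V} {a b c p w w' x y z : V}

theorem CpDir.edge_of_patternEquiv (h : D.CpDir a b) (hpat : D.PatternEquiv D') : D'.edge a b :=
  h D' (mequiv_iff_patternEquiv.2 hpat)

theorem CpDir.edge (h : D.CpDir a b) : D.edge a b := h.edge_of_patternEquiv (.refl D)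

theorem CpUndir.symm (h : D.CpUndir a b) : D.CpUndir b a := ⟨h.1.symm, h.2.2, h.2.1⟩

theorem IsVStructure.cpDir (h : D.IsVStructure x y z) : D.CpDir x y := fun _ hD' =>
  ((hD'.patternEquiv.isVStructure_iff x y z).1 h).collider.1

theorem exists_patternEquiv_edge (hadj : D.Adj a b) (h : ¬ D.CpDir b a) :
    ∃ D', D.PatternEquiv D' ∧ D'.edge a b := by
  simp only [CpDir, not_forall] at h
  obtain ⟨D', hD', hba⟩ := h
  exact ⟨D', hD'.patternEquiv, ((hD'.patternEquiv.adj_iff a b).1 hadj).resolve_right hba⟩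

theorem CpDir.trans_of_adj (hab : D.CpDir a b) (hbc : D.CpDir b c) (hac : D.Adj a c) :
    D.CpDir a c := fun D' hD' =>
  ((hD'.patternEquiv.adj_iff a c).1 hac).edge_of_anc (.head (hab D' hD') (.single (hbc D' hD')))

theorem CpDir.adj_of_cpUndir (hpw : D.CpDir p w) (hww' : D.CpUndir w w') : D.Adj p w' := by
  by_contra hadj
  have hne : p ≠ w' := fun h => hww'.2.2 (h ▸ hpw)
  obtain ⟨D', hpat, hw'w⟩ := exists_patternEquiv_edge hww'.1.symm hww'.2.1
  have hv := (hpat.isVStructure_iff p w w').2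
    ⟨hne, mt (hpat.adj_iff p w').2 hadj, hpw.edge_of_patternEquiv hpat, hw'w⟩
  exact hww'.2.2 hv.symm.cpDir

theorem CpDir.cpDir_of_cpUndir (hpw : D.CpDir p w) (hww' : D.CpUndir w w')
    (hpw' : ¬ D.CpUndir p w') : D.CpDir p w' := by
  have hadj := hpw.adj_of_cpUndir hww'
  by_contra hdir
  have hdir' : D.CpDir w' p := not_not.1 fun h => hpw' ⟨hadj, hdir, h⟩
  exact hww'.2.2 (hdir'.trans_of_adj hpw hww'.1.symm)

theorem CpDir.cpDir_of_reflTransGen_cpUndir (hpw : D.CpDir p w) (h : ReflTransGen D.CpUndir w w')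
    (hp : ¬ ReflTransGen D.CpUndir w p) : D.CpDir p w' := by
  induction h with
  | refl => exact hpw
  | tail hwy hyy' ih => exact ih.cpDir_of_cpUndir hyy' fun h => hp ((hwy.tail hyy').tail h.symm)

theorem IsVStructure.of_cpUndir (h : D.IsVStructure x w z) (hww' : D.CpUndir w w') :
    D.IsVStructure x w' z := by
  obtain ⟨D', hpat, hedge⟩ := exists_patternEquiv_edge hww'.1 hww'.2.2
  have edge_of_cpDir {u : V} (hu : D.CpDir u w) : D'.edge u w' :=
    ((hpat.adj_iff u w').1 (hu.adj_of_cpUndir hww')).edge_of_anc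
      (.head (hu.edge_of_patternEquiv hpat) (.single hedge))
  exact (hpat.isVStructure_iff x w' z).2 ⟨h.ne, mt (hpat.adj_iff x z).2 h.not_adj,
    edge_of_cpDir h.cpDir, edge_of_cpDir h.symm.cpDir⟩

theorem IsVStructure.not_reflTransGen_cpUndir (h : D.IsVStructure x y z) :
    ¬ ReflTransGen D.CpUndir y x := by
  intro hyx
  have hx : D.IsVStructure x x z := by
    induction hyx using ReflTransGen.head_induction_on with
    | refl => exact h
    | head hww' _ ih => exact ih (h.of_cpUndir hww')
  exact D.irrefl x hx.collider.1

/-- The chain component of `a`: the nodes connected to `a` by undirected edges of the CPDAG. -/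
def chainComponent (D : Dag V) (a : V) : Set V := {w | ReflTransGen D.CpUndir a w}

theorem reflTransGen_of_mem_chainComponent (hw : w ∈ D.chainComponent a)
    (hw' : w' ∈ D.chainComponent a) : ReflTransGen D.CpUndir w w' :=
  have : Std.Symm D.CpUndir := ⟨fun _ _ => CpUndir.symm⟩
  ReflTransGen.trans (symm hw) hw'

theorem parentsShared_chainComponent (D : Dag V) (a : V) :
    D.ParentsShared (D.chainComponent a) := by
  intro p hp w hw hpw w' hw'
  have hnot (h : ReflTransGen D.CpUndir w p) : False := hp (ReflTransGen.trans hw h)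
  have hdir : D.CpDir p w := by
    by_contra hdir
    exact hnot (.single ⟨.inr hpw, fun h => D.asymm hpw h.edge, hdir⟩)
  exact (hdir.cpDir_of_reflTransGen_cpUndir (reflTransGen_of_mem_chainComponent hw hw') hnot).edge

theorem not_cpDir_of_reflTransGen_cpUndir (h : ReflTransGen D.CpUndir a c) : ¬ D.CpDir c a := by
  have hroot := exists_patternEquiv_isRoot (D := D.restrict (D.chainComponent a)) (a := a)
    fun x y z hv =>
      have ⟨hx, hy, _, hv⟩ := restrict_isVStructure_iff.1 hv
      hv.not_reflTransGen_cpUndir (reflTransGen_of_mem_chainComponent hy hx)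
  obtain ⟨F, hF, hroot⟩ := hroot
  have hC := D.parentsShared_chainComponent a
  intro hca
  exact hroot c <| (reorient_edge_iff_of_mem hC hF h .refl).1 <|
    hca.edge_of_patternEquiv (patternEquiv_reorient hC hF)

/-- An edge of the CPDAG that is not directed from `b` to `a`; possibly directed paths consist of
such edges. -/
def CpPossEdge (D : Dag V) (a b : V) : Prop := D.Adj a b ∧ ¬ D.CpDir b a

theorem CpPossEdge.trans_of_adj (hab : D.CpPossEdge a b) (hbc : D.CpPossEdge b c)
    (hac : D.Adj a c) : D.CpPossEdge a c := by
  refine ⟨hac, fun hca => ?_⟩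
  by_cases hdir : D.CpDir a b
  · exact hbc.2 (hca.trans_of_adj hdir hbc.1.symm)
  · have hab' : D.CpUndir a b := ⟨hab.1, hdir, hab.2⟩
    have hcb : D.CpUndir c b := not_not.1 fun h => hbc.2 (hca.cpDir_of_cpUndir hab' h)
    exact not_cpDir_of_reflTransGen_cpUndir (.head hab' (.single hcb.symm)) hca

theorem CpPossEdge.of_edge (hD' : D.MEquiv D') (h : D'.edge a b) : D.CpPossEdge a b :=
  ⟨(hD'.patternEquiv.adj_iff a b).2 (.inl h), fun hba => D'.asymm h (hba D' hD')⟩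

theorem possAn_iff_reflTransGen : D.PossAn x y ↔ ReflTransGen D.CpPossEdge x y := by
  constructor
  · rintro ⟨p, hp⟩
    have hchain : ReflTransGen D.CpPossEdge (p.walk 0) (p.walk p.n) :=
      reflTransGen_of_chain fun i hi => ⟨p.adj_walk hi, by
        rw [p.walk_apply (by omega), p.walk_apply (by omega)]
        exact hp ⟨i, hi⟩⟩
    rwa [p.walk_zero, p.walk_n] at hchain
  · intro h
    obtain ⟨n, f, rfl, rfl, hf, hinj, -⟩ := exists_induced_chain h
    exact ⟨.ofWalk n f hinj fun i hi => (hf i hi).1, fun i => (hf i i.isLt).2⟩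

theorem exists_anc_of_reflTransGen (h : ReflTransGen D.CpPossEdge x y) :
    ∃ D', D.MEquiv D' ∧ D'.Anc x y := by
  obtain ⟨n, f, rfl, rfl, hf, hinj, hind⟩ := exists_induced_chain h
  obtain rfl | hn := n.eq_zero_or_pos
  · exact ⟨D, mequiv_iff_patternEquiv.2 (.refl D), .refl⟩
  obtain ⟨D', hpat, h01⟩ := exists_patternEquiv_edge (hf 0 hn).1 (hf 0 hn).2
  refine ⟨D', mequiv_iff_patternEquiv.2 hpat, reflTransGen_of_chain <| directed_of_no_collider
    (fun i hi => (hpat.adj_iff _ _).1 (hf i hi).1) (fun i hi hc => ?_) h01⟩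
  have hadj : ¬ D.Adj (f i) (f (i + 2)) := fun hadj =>
    hind i (i + 2) (by omega) hi ((hf i (by omega)).trans_of_adj (hf (i + 1) hi) hadj)
  have hv := (hpat.isVStructure_iff _ _ _).2
    ⟨hinj i (i + 2) (by omega) hi, mt (hpat.adj_iff _ _).2 hadj, hc⟩
  exact (hf (i + 1) hi).2 hv.symm.cpDir

end Dag

theorem ancestor_in_some_dag_iff_possAn_general (D : Dag V) (X Y : V) :
    (∃ D' : Dag V, D.MEquiv D' ∧ D'.Anc X Y) ↔ D.PossAn X Y := by
  rw [Dag.possAn_iff_reflTransGen]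
  exact ⟨fun ⟨_, hD', hXY⟩ => ReflTransGen.mono (fun _ _ => Dag.CpPossEdge.of_edge hD') _ _ hXY,
    Dag.exists_anc_of_reflTransGen⟩

/-- For distinct `X`, `Y`, `X` is an ancestor of `Y` in at least one DAG
of the MEC represented by the CPDAG `G` of the MEC of a DAG iff there is a possibly
directed path from `X` to `Y` in `G`. -/
theorem ancestor_in_some_dag_iff_possAn
    {V : Type*} [Fintype V] (D : Dag V) (X Y : V) (hXY : X ≠ Y) :
    (∃ D' : Dag V, D.MEquiv D' ∧ D'.Anc X Y) ↔ D.PossAn X Y :=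
  ancestor_in_some_dag_iff_possAn_general D X Y
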